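/- Let L > 0, N ∈ ℕ with N ≥ 2, a := 1/N, m₁, m₂ > 0, and let φ : ℝ → ℝ be C⁶ with φ(α+1) = φ(α) − L, φ′(α) ≤ −m₁ < 0, and |φ^{(k)}(α)| ≤ m₂ for 1 ≤ k ≤ 6. For a grid point α* = i₀·a, i₀ ∈ ℤ, define the exact-solution chemical potential f̄(α*) := −(2πa/L²)·Σ_{j∈G, j≢i₀} cot(π(φ(j·a)−φ(α*))/L) + ( 1/(φ(α*−a)−φ(α*)) − 1/(φ(α*)−φ(α*+a)) ) + a²·( 1/(φ(α*−a)−φ(α*))³ − 1/(φ(α*)−φ(α*+a))³ ), where G is any set of N consecutive integers containing i₀. Then there is C = C(m₁, m₂, L) with, for every grid point α*: f̄(α*) = μ(α*) + v₁(α*)·a + (v₂ + v₃)(α*)·a² + R, |R| ≤ C·a⁴, where μ(α) := (2π/L²)·PV∫₀¹ cot(π(φ(α)−φ(β))/L) dβ − φ″(α)/φ′(α)² − 3φ″(α)/φ′(α)⁴, v₁ := −φ″/(Lφ′²), v₂ := −φ⁗/(12φ′²) + (φ″/φ′⁴)((1/3)φ′φ‴ − (1/4)φ″²), and v₃ :=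 ( −(5/2)φ″³ − (1/4)φ′²φ⁗ + 2φ′φ″φ‴ )/φ′⁶. -/

import Mathlib

open Real Filter Topology MeasureTheory

/-- `v₁(α) = −φ″/(Lφ′²)`. -/
noncomputable def v1coef (L : ℝ) (φ : ℝ → ℝ) (α : ℝ) : ℝ :=
  -(iteratedDeriv 2 φ α) / (L * (deriv φ α) ^ 2)

/-- `v₂ = −φ⁗/(12φ′²) + (φ″/φ′⁴)((1/3)φ′φ‴ − (1/4)φ″²)`. -/
noncomputable def v2coef (φ : ℝ → ℝ) (α : ℝ) : ℝ :=
  -(iteratedDeriv 4 φ α) / (12 * (deriv φ α) ^ 2)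
    + (iteratedDeriv 2 φ α / (deriv φ α) ^ 4)
      * ((1 / 3) * deriv φ α * iteratedDeriv 3 φ α - (1 / 4) * (iteratedDeriv 2 φ α) ^ 2)

/-- `v₃ = (−(5/2)φ″³ − (1/4)φ′²φ⁗ + 2φ′φ″φ‴)/φ′⁶`. -/
noncomputable def v3coef (φ : ℝ → ℝ) (α : ℝ) : ℝ :=
  (-(5 / 2) * (iteratedDeriv 2 φ α) ^ 3
    - (1 / 4) * (deriv φ α) ^ 2 * iteratedDeriv 4 φ α
    + 2 * deriv φ α * iteratedDeriv 2 φ α * iteratedDeriv 3 φ α) / (deriv φ α) ^ 6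

/-!
Write `φ(t) - φ(α) = (t - α) s(t)`; the Hadamard quotient `s` inherits the bounds of `φ′` and stays
below `-m₁`. The nearest-neighbour differences are central differences of `s⁻¹` and `s⁻³` at `α`,
so their expansions are the odd Taylor expansions of these functions. In the cotangent sum, the pole
of `cot(π(φ(t) - φ(α))/L)` at `t = α` has the same residue as that of `L s(α)⁻¹ cot(π(t - α))`.
Subtracting the latter leaves a periodic `C⁴` kernel, for which the trapezoidal rule has error
`O(a⁴)`, while the subtracted term is odd and contributes neither to the grid sum nor to the
principal value. The grid sum omits the node `α`, where the kernel has the value `(L/π)(s⁻¹)′(α)`: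
this is the origin of `v₁`. All constants are uniform because every function involved is built from
`φ` by operations that preserve bounds on derivatives.
-/

section Hadamard

variable {f : ℝ → ℝ} {n : ℕ}

lemma dslope_eq_integral (hf : ContDiff ℝ 1 f) (a t : ℝ) :
    dslope f a t = ∫ s in (0 : ℝ)..1, deriv f (a + s * (t - a)) := by
  rcases eq_or_ne t a with rfl | hta
  · simp
  have hsub : (t - a) * ∫ s in (0 : ℝ)..1, deriv f (a + s * (t - a)) = f t - f a := by
    simpa using intervalIntegral.integral_unitInterval_deriv_eq_sub (f := f) (f' := deriv f)
      (z₀ := a) (z₁ := t - a)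
      ((hf.continuous_deriv le_rfl).comp (by fun_prop : Continuous fun s : ℝ ↦ a + s • (t - a))
        |>.continuousOn)
      fun s _ ↦ (hf.differentiable one_ne_zero _).hasDerivAt
  rw [dslope_of_ne _ hta, slope_def_field, ← hsub, mul_div_cancel_left₀ _ (sub_ne_zero.2 hta)]

lemma hasDerivAt_integral_pow_mul_comp (hf : ContDiff ℝ 1 f) (k : ℕ) (a t : ℝ) :
    HasDerivAt (fun t ↦ ∫ s in (0 : ℝ)..1, s ^ k * f (a + s * (t - a)))
      (∫ s in (0 : ℝ)..1, s ^ (k + 1) * deriv f (a + s * (t - a))) t := by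
  have : Continuous (deriv f) := hf.continuous_deriv le_rfl
  have hderiv_cont : Continuous fun p : ℝ × ℝ ↦ p.2 ^ (k + 1) * deriv f (a + p.2 * (p.1 - a)) := by
    fun_prop
  obtain ⟨B, hB⟩ := ((isCompact_closedBall t 1).prod (isCompact_Icc (a := (0 : ℝ)) (b := 1))
    |>.exists_bound_of_continuousOn hderiv_cont.continuousOn)
  refine (intervalIntegral.hasDerivAt_integral_of_dominated_loc_of_deriv_le
    (F' := fun x s ↦ s ^ (k + 1) * deriv f (a + s * (x - a))) (bound := fun _ ↦ B)
    (Metric.closedBall_mem_nhds t one_pos)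
    (.of_forall fun x ↦ Continuous.aestronglyMeasurable (by fun_prop))
    (Continuous.intervalIntegrable (by fun_prop) _ _)
    (Continuous.aestronglyMeasurable (by fun_prop))
    (.of_forall fun s hs x hx ↦ hB (x, s) ⟨hx, ?_⟩)
    (by simp) (.of_forall fun s _ x _ ↦ ?_)).2
  · rw [Set.uIoc_of_le zero_le_one] at hs
    exact Set.Ioc_subset_Icc_self hs
  · have hinner : HasDerivAt (fun x ↦ a + s * (x - a)) s x := by
      simpa using (((hasDerivAt_id x).sub_const a).const_mul s).const_add a
    have := ((hf.differentiable one_ne_zero _).hasDerivAt.comp x hinner).const_mul (s ^ k)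
    exact this.congr_deriv (by ring)

lemma iteratedDeriv_integral_pow_mul_comp (hf : ContDiff ℝ n f) (k : ℕ) (a : ℝ) :
    iteratedDeriv n (fun t ↦ ∫ s in (0 : ℝ)..1, s ^ k * f (a + s * (t - a))) =
      fun t ↦ ∫ s in (0 : ℝ)..1, s ^ (k + n) * iteratedDeriv n f (a + s * (t - a)) := by
  induction n generalizing f k with
  | zero => simp
  | succ n ih =>
    have hderiv : deriv (fun t ↦ ∫ s in (0 : ℝ)..1, s ^ k * f (a + s * (t - a))) =
        fun t ↦ ∫ s in (0 : ℝ)..1, s ^ (k + 1) * deriv f (a + s * (t - a)) :=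
      funext fun t ↦ (hasDerivAt_integral_pow_mul_comp (hf.of_le (by simp)) k a t).deriv
    rw [iteratedDeriv_succ', hderiv, ih (contDiff_succ_iff_deriv.1 hf).2.2, iteratedDeriv_succ',
      add_assoc, add_comm 1 n]

lemma contDiff_integral_pow_mul_comp (hf : ContDiff ℝ n f) (k : ℕ) (a : ℝ) :
    ContDiff ℝ n fun t ↦ ∫ s in (0 : ℝ)..1, s ^ k * f (a + s * (t - a)) := by
  induction n generalizing f k with
  | zero =>
    have := hf.continuous
    exact contDiff_zero.2 (intervalIntegral.continuous_parametric_intervalIntegral_of_continuous'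
      (by fun_prop) 0 1)
  | succ n ih =>
    have hderiv := hasDerivAt_integral_pow_mul_comp (hf.of_le (by simp)) k a
    refine contDiff_succ_iff_deriv (n := n).2
      ⟨fun t ↦ (hderiv t).differentiableAt, by simp, ?_⟩
    rw [funext fun t ↦ (hderiv t).deriv]
    exact ih (contDiff_succ_iff_deriv.1 hf).2.2 (k + 1)

lemma contDiff_dslope (hf : ContDiff ℝ (n + 1) f) (a : ℝ) : ContDiff ℝ n (dslope f a) := by
  rw [funext (dslope_eq_integral (hf.of_le (by simp)) a)]
  simpa using contDiff_integral_pow_mul_comp (contDiff_succ_iff_deriv.1 hf).2.2 0 a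

lemma iteratedDeriv_dslope (hf : ContDiff ℝ (n + 1) f) (a t : ℝ) :
    iteratedDeriv n (dslope f a) t =
      ∫ s in (0 : ℝ)..1, s ^ n * iteratedDeriv (n + 1) f (a + s * (t - a)) := by
  rw [funext (dslope_eq_integral (hf.of_le (by simp)) a), iteratedDeriv_succ']
  simpa using congrFun
    (iteratedDeriv_integral_pow_mul_comp (contDiff_succ_iff_deriv.1 hf).2.2 0 a) t

lemma iteratedDeriv_dslope_same (hf : ContDiff ℝ (n + 1) f) (a : ℝ) :
    iteratedDeriv n (dslope f a) a = iteratedDeriv (n + 1) f a / (n + 1) := by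
  simp [iteratedDeriv_dslope hf, div_eq_inv_mul]

lemma abs_iteratedDeriv_dslope_le {M : ℝ} (hf : ContDiff ℝ (n + 1) f)
    (hM : ∀ t, |iteratedDeriv (n + 1) f t| ≤ M) (a t : ℝ) :
    |iteratedDeriv n (dslope f a) t| ≤ M := by
  rw [iteratedDeriv_dslope hf, ← Real.norm_eq_abs]
  refine (intervalIntegral.norm_integral_le_of_norm_le_const (C := M) fun s hs ↦ ?_).trans_eq
    (by simp)
  rw [Set.uIoc_of_le zero_le_one] at hs
  rw [Real.norm_eq_abs, abs_mul, abs_of_nonneg (pow_nonneg hs.1.le n)]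
  exact (mul_le_of_le_one_left (abs_nonneg _) (pow_le_one₀ hs.1.le hs.2)).trans (hM _)

end Hadamard

/-- The members of the family `F` are of class `C^n` on their domains `U i`, with all derivatives
up to order `n` bounded there by one constant. This is what makes an estimate uniform in `i`. -/
structure UniformContDiffOn {ι : Type*} (n : ℕ) (F : ι → ℝ → ℝ) (U : ι → Set ℝ) : Prop where
  contDiffAt : ∀ i, ∀ t ∈ U i, ContDiffAt ℝ n (F i) t
  bounded : ∃ M, ∀ k ≤ n, ∀ i, ∀ t ∈ U i, |iteratedDeriv k (F i) t| ≤ M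

namespace UniformContDiffOn

variable {ι : Type*} {n : ℕ} {F G : ι → ℝ → ℝ} {U V : ι → Set ℝ}

lemma mono (hF : UniformContDiffOn n F U) (hVU : ∀ i, V i ⊆ U i) : UniformContDiffOn n F V where
  contDiffAt i t ht := hF.contDiffAt i t (hVU i ht)
  bounded := hF.bounded.imp fun _ hM k hk i t ht ↦ hM k hk i t (hVU i ht)

lemma of_le {m : ℕ} (hF : UniformContDiffOn n F U) (hmn : m ≤ n) : UniformContDiffOn m F U where
  contDiffAt i t ht := (hF.contDiffAt i t ht).of_le (by exact_mod_cast hmn)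
  bounded := hF.bounded.imp fun _ hM k hk ↦ hM k (hk.trans hmn)

lemma congr (hF : UniformContDiffOn n F U) (hU : ∀ i, IsOpen (U i))
    (hGF : ∀ i, Set.EqOn (G i) (F i) (U i)) : UniformContDiffOn n G U := by
  have heq (i : ι) (t : ℝ) (ht : t ∈ U i) : G i =ᶠ[𝓝 t] F i :=
    (hGF i).eventuallyEq_of_mem ((hU i).mem_nhds ht)
  exact
    { contDiffAt := fun i t ht ↦ (hF.contDiffAt i t ht).congr_of_eventuallyEq (heq i t ht)
      bounded := hF.bounded.imp fun _ hM k hk i t ht ↦ by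
        rw [(heq i t ht).iteratedDeriv_eq k]
        exact hM k hk i t ht }

lemma of_periodic (hF : UniformContDiffOn n F U) (hper : ∀ i, Function.Periodic (F i) 1)
    (hU : ∀ i (t : ℝ), ∃ m : ℤ, t - m ∈ U i) : UniformContDiffOn n F fun _ ↦ Set.univ := by
  have hshift (i : ι) (m : ℤ) : (fun t ↦ F i (t - m)) = F i :=
    funext fun t ↦ by simpa using (hper i).sub_int_mul_eq (x := t) m
  exact
    { contDiffAt := fun i t _ ↦ by
        obtain ⟨m, hm⟩ := hU i t
        rw [← hshift i m]
        exact (hF.contDiffAt i _ hm).comp t (contDiffAt_id.sub contDiffAt_const)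
      bounded := hF.bounded.imp fun M hM k hk i t _ ↦ by
        obtain ⟨m, hm⟩ := hU i t
        rw [← hshift i m, iteratedDeriv_comp_sub_const]
        exact hM k hk i _ hm }

lemma const {c : ι → ℝ} {B : ℝ} (hc : ∀ i, |c i| ≤ B) :
    UniformContDiffOn n (fun i _ ↦ c i) U where
  contDiffAt _ _ _ := contDiffAt_const
  bounded := ⟨B, fun k _ i t _ ↦ by
    rw [iteratedDeriv_const]
    split_ifs
    · exact hc i
    · simpa using (abs_nonneg _).trans (hc i)⟩

lemma add (hF : UniformContDiffOn n F U) (hG : UniformContDiffOn n G U) :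
    UniformContDiffOn n (fun i ↦ F i + G i) U where
  contDiffAt i t ht := (hF.contDiffAt i t ht).add (hG.contDiffAt i t ht)
  bounded := by
    obtain ⟨A, hA⟩ := hF.bounded
    obtain ⟨B, hB⟩ := hG.bounded
    refine ⟨A + B, fun k hk i t ht ↦ ?_⟩
    have hkn : (k : WithTop ℕ∞) ≤ n := by exact_mod_cast hk
    rw [iteratedDeriv_add ((hF.contDiffAt i t ht).of_le hkn) ((hG.contDiffAt i t ht).of_le hkn)]
    exact (abs_add_le _ _).trans (add_le_add (hA k hk i t ht) (hB k hk i t ht))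

lemma mul (hF : UniformContDiffOn n F U) (hG : UniformContDiffOn n G U) :
    UniformContDiffOn n (fun i ↦ F i * G i) U where
  contDiffAt i t ht := (hF.contDiffAt i t ht).mul (hG.contDiffAt i t ht)
  bounded := by
    obtain ⟨A, hA⟩ := hF.bounded
    obtain ⟨B, hB⟩ := hG.bounded
    refine ⟨2 ^ n * (A * B), fun k hk i t ht ↦ ?_⟩
    have hA₀ : 0 ≤ A := (abs_nonneg _).trans (hA k hk i t ht)
    have hB₀ : 0 ≤ B := (abs_nonneg _).trans (hB k hk i t ht)
    have hkn : (k : WithTop ℕ∞) ≤ n := by exact_mod_cast hk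
    rw [iteratedDeriv_mul ((hF.contDiffAt i t ht).of_le hkn) ((hG.contDiffAt i t ht).of_le hkn)]
    calc |∑ j ∈ Finset.range (k + 1),
          k.choose j * iteratedDeriv j (F i) t * iteratedDeriv (k - j) (G i) t|
        ≤ ∑ j ∈ Finset.range (k + 1), k.choose j * (A * B) := by
          refine (Finset.abs_sum_le_sum_abs _ _).trans (Finset.sum_le_sum fun j hj ↦ ?_)
          have hjk : j ≤ k := Finset.mem_range_succ_iff.1 hj
          rw [abs_mul, abs_mul, Nat.abs_cast, mul_assoc]
          gcongr
          · exact hA j (hjk.trans hk) i t ht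
          · exact hB (k - j) ((k.sub_le j).trans hk) i t ht
      _ = 2 ^ k * (A * B) := by
          rw [← Finset.sum_mul, ← Nat.cast_sum, Nat.sum_range_choose, Nat.cast_pow, Nat.cast_ofNat]
      _ ≤ 2 ^ n * (A * B) := by gcongr; norm_num

lemma sub (hF : UniformContDiffOn n F U) (hG : UniformContDiffOn n G U) :
    UniformContDiffOn n (fun i ↦ F i - G i) U := by
  have hneg : UniformContDiffOn n (fun i ↦ (fun _ ↦ -1) * G i) U :=
    (const (B := 1) (by simp)).mul hG
  convert hF.add hneg using 3 with i
  ext t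
  simp [sub_eq_add_neg]

lemma deriv (hF : UniformContDiffOn (n + 1) F U) :
    UniformContDiffOn n (fun i ↦ deriv (F i)) U where
  contDiffAt i t ht := (hF.contDiffAt i t ht).derivWithin (by norm_cast)
  bounded := hF.bounded.imp fun _ hM k hk i t ht ↦ by
    rw [← iteratedDeriv_succ']
    exact hM (k + 1) (by lia) i t ht

lemma of_deriv {B : ℝ} (hF : ∀ i, ∀ t ∈ U i, ContDiffAt ℝ (n + 1) (F i) t)
    (hB : ∀ i, ∀ t ∈ U i, |F i t| ≤ B) (hF' : UniformContDiffOn n (fun i ↦ _root_.deriv (F i)) U) :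
    UniformContDiffOn (n + 1) F U where
  contDiffAt := hF
  bounded := by
    obtain ⟨M, hM⟩ := hF'.bounded
    refine ⟨max B M, fun k hk i t ht ↦ ?_⟩
    cases k with
    | zero => simpa using Or.inl (hB i t ht)
    | succ k =>
      rw [iteratedDeriv_succ']
      exact (hM k (by lia) i t ht).trans (le_max_right _ _)

lemma contDiff (hF : UniformContDiffOn n F fun _ ↦ Set.univ) (i : ι) : ContDiff ℝ n (F i) :=
  contDiff_iff_contDiffAt.2 fun t ↦ hF.contDiffAt i t trivial

lemma comp {Φ : ℝ → ℝ} {S K : Set ℝ} (hΦ : ContDiffOn ℝ n Φ S) (hS : IsOpen S)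
    (hK : IsCompact K) (hKS : K ⊆ S) (hF : UniformContDiffOn n F U) (hU : ∀ i, IsOpen (U i))
    (hFK : ∀ i, Set.MapsTo (F i) (U i) K) : UniformContDiffOn n (fun i ↦ Φ ∘ F i) U where
  contDiffAt i t ht :=
    (hΦ.contDiffAt (hS.mem_nhds (hKS (hFK i ht)))).comp t (hF.contDiffAt i t ht)
  bounded := by
    have hΦ_bdd (k : ℕ) (hk : k ≤ n) : ∃ A, ∀ x ∈ K, ‖iteratedFDerivWithin ℝ k Φ S x‖ ≤ A :=
      hK.exists_bound_of_continuousOn ((hΦ.continuousOn_iteratedFDerivWithin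
        (by exact_mod_cast hk) hS.uniqueDiffOn).mono hKS)
    choose! A hA using hΦ_bdd
    obtain ⟨B, hB⟩ := hF.bounded
    set C := ∑ k ∈ Finset.range (n + 1), |A k|
    set D := max B 1
    have hAC (k : ℕ) (hk : k ≤ n) : A k ≤ C := (le_abs_self _).trans <|
      Finset.single_le_sum (f := fun k ↦ |A k|) (fun _ _ ↦ abs_nonneg _)
        (Finset.mem_range_succ_iff.2 hk)
    refine ⟨n.factorial * C * D ^ n, fun k hk i t ht ↦ ?_⟩
    rw [← Real.norm_eq_abs, ← norm_iteratedFDeriv_eq_norm_iteratedDeriv,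
      ← iteratedFDerivWithin_of_isOpen k (hU i) ht]
    have hcomp : ‖iteratedFDerivWithin ℝ k (Φ ∘ F i) (U i) t‖ ≤ k.factorial * C * D ^ k := by
      refine norm_iteratedFDerivWithin_comp_le hΦ
        (fun s hs ↦ (hF.contDiffAt i s hs).contDiffWithinAt) (by exact_mod_cast hk)
        hS.uniqueDiffOn (hU i).uniqueDiffOn (fun s hs ↦ hKS (hFK i hs)) ht
        (fun j hj ↦ (hA j (hj.trans hk) _ (hFK i ht)).trans (hAC j (hj.trans hk)))
        (fun j hj hjk ↦ ?_)
      rw [iteratedFDerivWithin_of_isOpen j (hU i) ht, norm_iteratedFDeriv_eq_norm_iteratedDeriv]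
      exact (hB j (hjk.trans hk) i t ht).trans <|
        (le_max_left B 1).trans (le_self_pow₀ (le_max_right B 1) (by lia))
    refine hcomp.trans ?_
    gcongr
    exact le_max_right B 1

lemma dslope (hF : ∀ i, ContDiff ℝ (n + 1) (F i))
    (hF' : UniformContDiffOn n (fun i ↦ _root_.deriv (F i)) fun _ ↦ Set.univ) (a : ι → ℝ) :
    UniformContDiffOn n (fun i ↦ dslope (F i) (a i)) fun _ ↦ Set.univ where
  contDiffAt i _ _ := (contDiff_dslope (hF i) (a i)).contDiffAt
  bounded := hF'.bounded.imp fun M hM k hk i t _ ↦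
    abs_iteratedDeriv_dslope_le ((hF i).of_le (by exact_mod_cast Nat.succ_le_succ hk))
      (fun s ↦ by simpa only [iteratedDeriv_succ'] using hM k hk i s trivial) (a i) t

end UniformContDiffOn

section Cotangent

lemma cot_neg (x : ℝ) : cot (-x) = -cot x := by
  rw [cot_eq_cos_div_sin, cot_eq_cos_div_sin, cos_neg, sin_neg, div_neg]

lemma cot_periodic : Function.Periodic cot π := fun x ↦ by
  rw [cot_eq_cos_div_sin, cot_eq_cos_div_sin, cos_add_pi, sin_add_pi, neg_div_neg_eq]

lemma cot_zero : cot 0 = 0 := by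
  rw [cot_eq_cos_div_sin, sin_zero, div_zero]

lemma sin_pi_mul_ne_zero_of_abs_lt_one {x : ℝ} (hx₀ : x ≠ 0) (hx : |x| < 1) : sin (π * x) ≠ 0 := by
  rw [abs_lt] at hx
  rw [Ne, sin_eq_zero_iff_of_lt_of_lt (by nlinarith [pi_pos]) (by nlinarith [pi_pos])]
  exact mul_ne_zero pi_ne_zero hx₀

lemma contDiffAt_cot {x : ℝ} {n : WithTop ℕ∞} (hx : sin x ≠ 0) : ContDiffAt ℝ n cot x := by
  rw [funext cot_eq_cos_div_sin]
  exact contDiff_cos.contDiffAt.div contDiff_sin.contDiffAt hx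

lemma contDiff_sinc (n : ℕ) : ContDiff ℝ n sinc := by
  rw [sinc_eq_dslope]
  exact contDiff_dslope contDiff_sin 0

lemma sinc_pos {x : ℝ} (hx : x ∈ Set.Ioo (-π) π) : 0 < sinc x := by
  wlog hx₀ : 0 ≤ x generalizing x
  · rw [← sinc_neg]
    exact this ⟨by linarith [hx.2], by linarith [hx.1]⟩ (by linarith)
  rcases hx₀.eq_or_lt with rfl | hx₀
  · simp
  · rw [sinc_of_ne_zero hx₀.ne']
    exact div_pos (sin_pos_of_pos_of_lt_pi hx₀ hx.2) hx₀

lemma contDiffOn_logDeriv_sinc (n : ℕ) : ContDiffOn ℝ n (logDeriv sinc) (Set.Ioo (-π) π) := by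
  have hderiv : ContDiff ℝ n (deriv sinc) := (contDiff_succ_iff_deriv.1 (contDiff_sinc (n + 1))).2.2
  exact hderiv.contDiffOn.div (contDiff_sinc n).contDiffOn fun x hx ↦ (sinc_pos hx).ne'

lemma logDeriv_sinc_zero : logDeriv sinc 0 = 0 := by
  have hderiv : deriv sinc 0 = 0 := by
    rw [← iteratedDeriv_one, sinc_eq_dslope,
      iteratedDeriv_dslope_same (by norm_num; exact contDiff_sin)]
    simp [iteratedDeriv_succ]
  rw [logDeriv_apply, hderiv, zero_div]

lemma cot_eq_inv_add_logDeriv_sinc {x : ℝ} (hx : x ≠ 0) (hsin : sin x ≠ 0) :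
    cot x = x⁻¹ + logDeriv sinc x := by
  have hsinc : sinc =ᶠ[𝓝 x] fun y ↦ sin y / y :=
    (eventually_ne_nhds hx).mono fun y hy ↦ sinc_of_ne_zero hy
  have hlog : logDeriv sinc x = cot x - x⁻¹ := by
    rw [logDeriv_apply, hsinc.deriv_eq, hsinc.eq_of_nhds, ← logDeriv_apply,
      logDeriv_div (g := fun y ↦ y) x hsin hx differentiableAt_sin differentiableAt_id,
      logDeriv_sin, logDeriv_apply, deriv_id'', one_div]
  rw [hlog, add_sub_cancel]

lemma integral_cot_pi_mul_sub_eq_zero (a δ : ℝ) :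
    ∫ t in (a + δ)..(a + 1 - δ), cot (π * (t - a)) = 0 := by
  have hodd (t : ℝ) : cot (π * (2 * a + 1 - t - a)) = -cot (π * (t - a)) := by
    rw [← cot_neg, ← cot_periodic (-_)]
    ring_nf
  have hrefl := intervalIntegral.integral_comp_sub_left (a := a + δ) (b := a + 1 - δ)
    (fun t ↦ cot (π * (t - a))) (2 * a + 1)
  rw [show 2 * a + 1 - (a + 1 - δ) = a + δ by ring,
    show 2 * a + 1 - (a + δ) = a + 1 - δ by ring] at hrefl
  simp only [hodd, intervalIntegral.integral_neg] at hrefl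
  linarith

end Cotangent

/-- The error of the end-corrected trapezoidal rule for `f` on the single cell `[x, y]`. -/
noncomputable def trapezoidDefect (f : ℝ → ℝ) (x y : ℝ) : ℝ :=
  (∫ t in x..y, f t) - (y - x) / 2 * (f x + f y) + (y - x) ^ 2 / 12 * (deriv f y - deriv f x)

section Trapezoid

variable {f : ℝ → ℝ} {M : ℝ}

-- Four integrations by parts against a kernel that vanishes to second order at both endpoints.
lemma trapezoidDefect_eq_integral (hf : ContDiff ℝ 4 f) (x y : ℝ) :
    trapezoidDefect f x y =
      ∫ t in x..y, ((t - x) * (y - t)) ^ 2 / 24 * iteratedDeriv 4 f t := by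
  have hderiv (k : ℕ) (hk : k < 4) (t : ℝ) :
      HasDerivAt (iteratedDeriv k f) (iteratedDeriv (k + 1) f t) t := by
    rw [iteratedDeriv_succ]
    exact (hf.differentiable_iteratedDeriv k (by exact_mod_cast hk) t).hasDerivAt
  have hf_cont : Continuous f := hf.continuous
  have : Continuous (iteratedDeriv 4 f) := hf.continuous_iteratedDeriv 4 le_rfl
  have hprimitive (t : ℝ) : HasDerivAt (fun t ↦
      ((t - x) * (y - t)) ^ 2 / 24 * iteratedDeriv 3 f t
        - (t - x) * (y - t) * (x + y - 2 * t) / 12 * iteratedDeriv 2 f t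
        + ((x + y - 2 * t) ^ 2 - 2 * ((t - x) * (y - t))) / 12 * iteratedDeriv 1 f t
        + (x + y - 2 * t) / 2 * iteratedDeriv 0 f t)
      (((t - x) * (y - t)) ^ 2 / 24 * iteratedDeriv 4 f t - f t) t := by
    have hprod : HasDerivAt (fun t ↦ (t - x) * (y - t)) (x + y - 2 * t) t :=
      (((hasDerivAt_id t).sub_const x).mul ((hasDerivAt_id t).const_sub y)).congr_deriv
        (by simp only [id_eq]; ring)
    have hlin : HasDerivAt (fun t ↦ x + y - 2 * t) (-2) t := by
      simpa using ((hasDerivAt_id t).const_mul 2).const_sub (x + y)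
    refine ((((((hprod.pow 2).div_const 24).mul (hderiv 3 (by norm_num) t)).sub
      (((hprod.mul hlin).div_const 12).mul (hderiv 2 (by norm_num) t))).add
      ((((hlin.pow 2).sub (hprod.const_mul 2)).div_const 12).mul (hderiv 1 (by norm_num) t))).add
      ((hlin.div_const 2).mul (hderiv 0 (by norm_num) t))).congr_deriv ?_
    simp only [iteratedDeriv_zero, Pi.pow_apply, Pi.mul_apply, Pi.sub_apply]
    push_cast
    ring
  have hftc := intervalIntegral.integral_eq_sub_of_hasDerivAt (a := x) (b := y)
    (fun t _ ↦ hprimitive t) (Continuous.intervalIntegrable (by fun_prop) _ _)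
  rw [intervalIntegral.integral_sub (Continuous.intervalIntegrable (by fun_prop) _ _)
    (Continuous.intervalIntegrable (by fun_prop) _ _)] at hftc
  simp only [iteratedDeriv_zero, iteratedDeriv_one] at hftc
  rw [trapezoidDefect]
  linear_combination -hftc

lemma abs_trapezoidDefect_le (hf : ContDiff ℝ 4 f) (hM : ∀ t, |iteratedDeriv 4 f t| ≤ M)
    {x y : ℝ} (hxy : x ≤ y) : |trapezoidDefect f x y| ≤ M * (y - x) ^ 5 / 384 := by
  rw [trapezoidDefect_eq_integral hf, ← Real.norm_eq_abs]
  refine (intervalIntegral.norm_integral_le_of_norm_le_const (C := (y - x) ^ 4 / 384 * M)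
    fun t ht ↦ ?_).trans_eq (by rw [abs_of_nonneg (sub_nonneg.2 hxy)]; ring)
  rw [Set.uIoc_of_le hxy] at ht
  have hprod : 0 ≤ (t - x) * (y - t) := mul_nonneg (by linarith [ht.1]) (by linarith [ht.2])
  have hamgm : (t - x) * (y - t) ≤ (y - x) ^ 2 / 4 := by nlinarith [sq_nonneg (x + y - 2 * t)]
  have hkernel : ((t - x) * (y - t)) ^ 2 / 24 ≤ (y - x) ^ 4 / 384 := by
    calc ((t - x) * (y - t)) ^ 2 / 24 ≤ ((y - x) ^ 2 / 4) ^ 2 / 24 := by gcongr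
      _ = (y - x) ^ 4 / 384 := by ring
  rw [Real.norm_eq_abs, abs_mul, abs_of_nonneg (by positivity)]
  exact mul_le_mul hkernel (hM t) (abs_nonneg _) (by positivity)

lemma sum_trapezoidDefect_of_periodic (hf : Continuous f) {a : ℝ} {N : ℕ}
    (hper : Function.Periodic f (N * a)) (x : ℝ) :
    ∑ j ∈ Finset.range N, trapezoidDefect f (x + j * a) (x + (j + 1 : ℕ) * a) =
      (∫ t in x..(x + N * a), f t) - a * ∑ j ∈ Finset.range N, f (x + j * a) := by
  set node : ℕ → ℝ := fun j ↦ x + j * a with hnode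
  have hstep (j : ℕ) : node (j + 1) - node j = a := by simp only [hnode]; push_cast; ring
  have hintegral : ∑ j ∈ Finset.range N, ∫ t in node j..node (j + 1), f t =
      ∫ t in x..(x + N * a), f t := by
    simpa [node] using intervalIntegral.sum_integral_adjacent_intervals (a := node) (n := N)
      (fun j _ ↦ hf.intervalIntegrable (μ := volume) (node j) (node (j + 1)))
  have hvalues : ∑ j ∈ Finset.range N, f (node (j + 1)) = ∑ j ∈ Finset.range N, f (node j) := by
    rw [← sub_eq_zero, ← Finset.sum_sub_distrib, Finset.sum_range_sub (fun j ↦ f (node j))]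
    simp [node, hper x]
  have hderivs : ∑ j ∈ Finset.range N, (deriv f (node (j + 1)) - deriv f (node j)) = 0 := by
    have hper' : deriv f (x + N * a) = deriv f x := by rw [← deriv_comp_add_const, funext hper]
    rw [Finset.sum_range_sub (fun j ↦ deriv f (node j))]
    simp [node, hper']
  change ∑ j ∈ Finset.range N, trapezoidDefect f (node j) (node (j + 1)) = _
  simp only [trapezoidDefect, hstep]
  rw [Finset.sum_add_distrib, Finset.sum_sub_distrib, ← Finset.mul_sum, ← Finset.mul_sum,
    Finset.sum_add_distrib, hvalues, hderivs, hintegral]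
  ring

lemma abs_mul_sum_range_sub_integral_le_of_periodic (hf : ContDiff ℝ 4 f)
    (hM : ∀ t, |iteratedDeriv 4 f t| ≤ M) {a : ℝ} (ha : 0 ≤ a) {N : ℕ}
    (hper : Function.Periodic f (N * a)) (x : ℝ) :
    |a * ∑ j ∈ Finset.range N, f (x + j * a) - ∫ t in x..(x + N * a), f t| ≤
      N * (M * a ^ 5 / 384) := by
  have hcell (j : ℕ) :
      |trapezoidDefect f (x + j * a) (x + (j + 1 : ℕ) * a)| ≤ M * a ^ 5 / 384 := by
    have hstep : x + (j + 1 : ℕ) * a - (x + j * a) = a := by push_cast; ring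
    have hle := abs_trapezoidDefect_le hf hM (sub_nonneg.1 (ha.trans_eq hstep.symm))
    rwa [hstep] at hle
  rw [abs_sub_comm, ← sum_trapezoidDefect_of_periodic hf.continuous hper]
  calc _ ≤ ∑ _j ∈ Finset.range N, M * a ^ 5 / 384 :=
        (Finset.abs_sum_le_sum_abs _ _).trans (Finset.sum_le_sum fun j _ ↦ hcell j)
    _ = N * (M * a ^ 5 / 384) := by simp

lemma abs_inv_mul_sum_Ico_sub_integral_le_of_periodic (hf : ContDiff ℝ 4 f)
    (hM : ∀ t, |iteratedDeriv 4 f t| ≤ M) (hper : Function.Periodic f 1) {N : ℕ} (hN : N ≠ 0)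
    (k : ℤ) (x : ℝ) :
    |(N : ℝ)⁻¹ * ∑ j ∈ Finset.Ico k (k + N), f (j * (N : ℝ)⁻¹) - ∫ t in x..(x + 1), f t| ≤
      M * (N : ℝ)⁻¹ ^ 4 / 384 := by
  have hN' : (N : ℝ) * (N : ℝ)⁻¹ = 1 := mul_inv_cancel₀ (Nat.cast_ne_zero.2 hN)
  have hsum : ∑ j ∈ Finset.Ico k (k + N), f (j * (N : ℝ)⁻¹) =
      ∑ j ∈ Finset.range N, f (k * (N : ℝ)⁻¹ + j * (N : ℝ)⁻¹) := by
    rw [Int.Ico_eq_finset_map, Finset.sum_map]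
    simp [add_mul]
  have h := abs_mul_sum_range_sub_integral_le_of_periodic hf hM (a := (N : ℝ)⁻¹) (by positivity)
    (N := N) (by rwa [hN']) (k * (N : ℝ)⁻¹)
  rw [hN', hper.intervalIntegral_add_eq _ x, ← hsum] at h
  exact h.trans_eq (by linear_combination M * (N : ℝ)⁻¹ ^ 4 / 384 * hN')

end Trapezoid

section PeriodicSum

variable {f : ℤ → ℝ} {N : ℕ}

lemma sum_Ico_eq_of_periodic (hf : Function.Periodic f N) (k l : ℤ) :
    ∑ j ∈ Finset.Ico k (k + N), f j = ∑ j ∈ Finset.Ico l (l + N), f j := by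
  suffices h : ∀ k : ℤ, ∑ j ∈ Finset.Ico k (k + N), f j = ∑ j ∈ Finset.Ico (0 : ℤ) N, f j by
    rw [h k, h l]
  intro k
  have himage := Int.image_Ico_emod k N (Int.natCast_nonneg N)
  have hinj : Set.InjOn (· % (N : ℤ)) (Finset.Ico k (k + N)) :=
    Finset.card_image_iff.1 (by rw [himage]; simp)
  rw [← himage, Finset.sum_image hinj]
  refine Finset.sum_congr rfl fun j _ ↦ ?_
  rw [Int.emod_def, mul_comm]
  exact (hf.sub_int_mul_eq (j / N)).symm

lemma sum_Ico_eq_zero_of_periodic_of_odd (hf : Function.Periodic f N) (hodd : f.Odd) (k : ℤ) :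
    ∑ j ∈ Finset.Ico k (k + N), f j = 0 := by
  have hrefl : ∑ j ∈ Finset.Ico k (k + N), f (-j) = ∑ j ∈ Finset.Ico (1 - k - N) (1 - k), f j :=
    Finset.sum_nbij' (-·) (-·) (by simp; lia) (by simp; lia) (by simp) (by simp) (by simp)
  have hshift := sum_Ico_eq_of_periodic hf k (1 - k - N)
  rw [sub_add_cancel, ← hrefl] at hshift
  simp only [hodd _, Finset.sum_neg_distrib] at hshift
  linarith

lemma sum_Ico_cot_eq_zero (hN : N ≠ 0) (k i₀ : ℤ) :
    ∑ j ∈ Finset.Ico k (k + N), cot (π * (j * (N : ℝ)⁻¹ - i₀ * (N : ℝ)⁻¹)) = 0 := by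
  set f : ℤ → ℝ := fun j ↦ cot (π * (j * (N : ℝ)⁻¹)) with hf
  have hper : Function.Periodic f N := fun j ↦ by
    simp only [hf]
    rw [← cot_periodic (π * (j * (N : ℝ)⁻¹))]
    congr 1
    push_cast
    field_simp
  have hodd : f.Odd := fun j ↦ by simp [hf, cot_neg]
  have hshift := Finset.sum_Ico_add' f k (k + N) (-i₀)
  rw [add_right_comm, sum_Ico_eq_zero_of_periodic_of_odd hper hodd] at hshift
  rw [← hshift]
  refine Finset.sum_congr rfl fun j _ ↦ ?_
  simp only [hf]
  push_cast
  ring_nf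

end PeriodicSum

section Taylor

variable {f : ℝ → ℝ} {M : ℝ} {n : ℕ}

lemma abs_sub_sum_iteratedDeriv_le (hf : ContDiff ℝ (n + 1) f)
    (hM : ∀ t, |iteratedDeriv (n + 1) f t| ≤ M) (x y : ℝ) :
    |f y - ∑ k ∈ Finset.range (n + 1), iteratedDeriv k f x * (y - x) ^ k / k.factorial| ≤
      M * |y - x| ^ (n + 1) / (n + 1).factorial := by
  rcases eq_or_ne x y with rfl | hxy
  · simp [Finset.sum_range_succ']
  obtain ⟨z, -, hz⟩ := taylor_mean_remainder_lagrange_iteratedDeriv hxy hf.contDiffOn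
  have htaylor : taylorWithinEval f n (Set.uIcc x y) x y =
      ∑ k ∈ Finset.range (n + 1), iteratedDeriv k f x * (y - x) ^ k / k.factorial := by
    rw [taylor_within_apply]
    refine Finset.sum_congr rfl fun k hk ↦ ?_
    rw [iteratedDerivWithin_eq_iteratedDeriv (uniqueDiffOn_uIcc hxy) _ Set.left_mem_uIcc,
      smul_eq_mul]
    · ring
    · exact (hf.of_le (by exact_mod_cast (Finset.mem_range.1 hk).le)).contDiffAt
  rw [← htaylor, hz, abs_div, abs_mul, abs_pow, Nat.abs_cast]
  gcongr
  exact hM z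

lemma abs_add_sub_sub_odd_taylor_le (hf : ContDiff ℝ 5 f) (hM : ∀ t, |iteratedDeriv 5 f t| ≤ M)
    (x : ℝ) {a : ℝ} (ha : 0 ≤ a) :
    |f (x + a) - f (x - a) - (2 * a * deriv f x + a ^ 3 / 3 * iteratedDeriv 3 f x)| ≤
      M * a ^ 5 / 60 := by
  have hright := abs_sub_sum_iteratedDeriv_le (n := 4) hf hM x (x + a)
  have hleft := abs_sub_sum_iteratedDeriv_le (n := 4) hf hM x (x - a)
  simp only [Finset.sum_range_succ, Finset.sum_range_zero, iteratedDeriv_zero, iteratedDeriv_one,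
    add_sub_cancel_left, show x - a - x = -a by ring, abs_neg, abs_of_nonneg ha] at hright hleft
  norm_num [Nat.factorial] at hright hleft
  rw [abs_le] at *
  constructor <;> linarith [hright.1, hright.2, hleft.1, hleft.2]

end Taylor

section ZPow

variable {h : ℝ → ℝ} {x : ℝ}

lemma contDiffAt_zpow {n : WithTop ℕ∞} (hx : x ≠ 0) (p : ℤ) :
    ContDiffAt ℝ n (fun y : ℝ ↦ y ^ p) x :=
  (analyticAt_id.zpow hx).contDiffAt

lemma deriv_zpow_comp (hh : DifferentiableAt ℝ h x) (hx : h x ≠ 0) (p : ℤ) :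
    deriv (h ^ p) x = p * h x ^ (p - 1) * deriv h x :=
  ((hasDerivAt_zpow p (h x) (.inl hx)).comp x hh.hasDerivAt).deriv

lemma iteratedDeriv_three_zpow_comp (hh : ContDiffAt ℝ 3 h x) (hx : h x ≠ 0) (p : ℤ) :
    iteratedDeriv 3 (h ^ p) x = p * (p - 1) * (p - 2) * h x ^ (p - 3) * deriv h x ^ 3
      + 3 * (p * (p - 1) * h x ^ (p - 2)) * iteratedDeriv 2 h x * deriv h x
      + p * h x ^ (p - 1) * iteratedDeriv 3 h x := by
  have hcomp : iteratedDeriv 3 (h ^ p) x = _ :=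
    iteratedDeriv_comp_three (g := fun y ↦ y ^ p) (contDiffAt_zpow hx p) hh
  have hiter (k : ℕ) := iter_deriv_zpow p (h x) k
  simp only [← iteratedDeriv_eq_iterate] at hiter
  rw [hiter, hiter, deriv_zpow] at hcomp
  simpa [Finset.prod_range_succ] using hcomp

end ZPow

/-- A profile `φ` with the standing assumptions of the expansion, together with the base point `α`
at which the chemical potential is expanded. It serves as the index of uniform families. -/
structure PointedProfile (L m₁ m₂ : ℝ) where
  φ : ℝ → ℝ
  α : ℝ
  contDiff : ContDiff ℝ 6 φ
  map_add_one : ∀ t, φ (t + 1) = φ t - L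
  deriv_le : ∀ t, deriv φ t ≤ -m₁
  abs_iteratedDeriv_le : ∀ k, 1 ≤ k → k ≤ 6 → ∀ t, |iteratedDeriv k φ t| ≤ m₂

namespace PointedProfile

variable {L m₁ m₂ : ℝ}

/-- The difference quotient of the profile based at `α`, continued by `φ′(α)` at `α`. -/
noncomputable def slope (i : PointedProfile L m₁ m₂) : ℝ → ℝ := dslope i.φ i.α

section Slope

variable (i : PointedProfile L m₁ m₂)

lemma sub_mul_slope (t : ℝ) : (t - i.α) * i.slope t = i.φ t - i.φ i.α := by
  simpa [slope] using sub_smul_dslope i.φ i.α t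

lemma slope_le (t : ℝ) : i.slope t ≤ -m₁ := by
  have hφ : ContDiff ℝ 1 i.φ := i.contDiff.of_le (by norm_num)
  have : Continuous (deriv i.φ) := hφ.continuous_deriv le_rfl
  rw [slope, dslope_eq_integral hφ]
  calc ∫ s in (0 : ℝ)..1, deriv i.φ (i.α + s * (t - i.α)) ≤ ∫ _ in (0 : ℝ)..1, -m₁ :=
        intervalIntegral.integral_mono_on zero_le_one
          (Continuous.intervalIntegrable (by fun_prop) _ _) (by simp) fun s _ ↦ i.deriv_le _
    _ = -m₁ := by simp

lemma abs_slope_le (t : ℝ) : |i.slope t| ≤ m₂ := by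
  simpa [slope] using abs_iteratedDeriv_dslope_le (n := 0) (f := i.φ) (M := m₂)
    (i.contDiff.of_le (by norm_num)) (i.abs_iteratedDeriv_le 1 le_rfl (by norm_num)) i.α t

lemma slope_ne_zero (hm₁ : 0 < m₁) (t : ℝ) : i.slope t ≠ 0 := by
  linarith [i.slope_le t]

lemma contDiff_slope : ContDiff ℝ 5 i.slope :=
  contDiff_dslope (n := 5) i.contDiff i.α

lemma slope_self : i.slope i.α = deriv i.φ i.α :=
  dslope_same _ _

lemma iteratedDeriv_slope_self {k : ℕ} (hk : k ≤ 5) :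
    iteratedDeriv k i.slope i.α = iteratedDeriv (k + 1) i.φ i.α / (k + 1) :=
  iteratedDeriv_dslope_same (i.contDiff.of_le (by exact_mod_cast Nat.succ_le_succ hk)) i.α

end Slope

lemma uniformContDiffOn_deriv :
    UniformContDiffOn 5 (fun i : PointedProfile L m₁ m₂ ↦ deriv i.φ) fun _ ↦ Set.univ where
  contDiffAt i _ _ := (contDiff_succ_iff_deriv.1 i.contDiff).2.2.contDiffAt
  bounded := ⟨m₂, fun k hk i t _ ↦ by
    rw [← iteratedDeriv_succ']
    exact i.abs_iteratedDeriv_le (k + 1) (by lia) (by lia) t⟩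

lemma uniformContDiffOn_slope_zpow (hm₁ : 0 < m₁) (p : ℤ) :
    UniformContDiffOn 5 (fun i : PointedProfile L m₁ m₂ ↦ i.slope ^ p) fun _ ↦ Set.univ :=
  UniformContDiffOn.comp (Φ := fun y ↦ y ^ p) (S := Set.Iio 0) (K := Set.Icc (-m₂) (-m₁))
    (fun _ hy ↦ (contDiffAt_zpow (Set.mem_Iio.1 hy).ne p).contDiffWithinAt) isOpen_Iio
    isCompact_Icc (fun y hy ↦ by simpa using hy.2.trans_lt (neg_neg_of_pos hm₁))
    (uniformContDiffOn_deriv.dslope (fun i ↦ i.contDiff) PointedProfile.α)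
    (fun _ ↦ isOpen_univ) (fun i t _ ↦ ⟨(abs_le.1 (i.abs_slope_le t)).1, i.slope_le t⟩)

section NearestNeighbour

variable (i : PointedProfile L m₁ m₂)

lemma pow_mul_inv_sub_inv_eq {a : ℝ} (ha : a ≠ 0) {n : ℕ} (hn : Odd n) :
    a ^ (n - 1) * (1 / (i.φ (i.α - a) - i.φ i.α) ^ n - 1 / (i.φ i.α - i.φ (i.α + a)) ^ n) =
      ((i.slope ^ (-n : ℤ)) (i.α + a) - (i.slope ^ (-n : ℤ)) (i.α - a)) / a := by
  have hright : i.φ i.α - i.φ (i.α + a) = -(a * i.slope (i.α + a)) := by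
    linear_combination i.sub_mul_slope (i.α + a)
  have hleft : i.φ (i.α - a) - i.φ i.α = -(a * i.slope (i.α - a)) := by
    linear_combination -i.sub_mul_slope (i.α - a)
  obtain ⟨m, rfl⟩ := hn
  rw [hright, hleft, Odd.neg_pow ⟨m, rfl⟩, Odd.neg_pow ⟨m, rfl⟩]
  simp only [Pi.pow_apply, zpow_neg, zpow_natCast, mul_pow, one_div, inv_neg, mul_inv]
  rw [Nat.add_sub_cancel, pow_succ a]
  field_simp
  ring

lemma two_mul_deriv_slope_zpow_self (hm₁ : 0 < m₁) (p : ℤ) :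
    2 * deriv (i.slope ^ p) i.α = p * deriv i.φ i.α ^ (p - 1) * iteratedDeriv 2 i.φ i.α := by
  have hslope' : deriv i.slope i.α = iteratedDeriv 2 i.φ i.α / 2 := by
    simpa [one_add_one_eq_two] using i.iteratedDeriv_slope_self (k := 1) (by norm_num)
  rw [deriv_zpow_comp (i.contDiff_slope.differentiable (by norm_num) _) (i.slope_ne_zero hm₁ _),
    i.slope_self, hslope']
  ring

lemma iteratedDeriv_three_slope_zpow_self (hm₁ : 0 < m₁) (p : ℤ) :
    iteratedDeriv 3 (i.slope ^ p) i.α =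
      p * (p - 1) * (p - 2) * deriv i.φ i.α ^ (p - 3) * (iteratedDeriv 2 i.φ i.α / 2) ^ 3
      + 3 * (p * (p - 1) * deriv i.φ i.α ^ (p - 2))
        * (iteratedDeriv 3 i.φ i.α / 3) * (iteratedDeriv 2 i.φ i.α / 2)
      + p * deriv i.φ i.α ^ (p - 1) * (iteratedDeriv 4 i.φ i.α / 4) := by
  rw [iteratedDeriv_three_zpow_comp (i.contDiff_slope.contDiffAt.of_le (by norm_num))
    (i.slope_ne_zero hm₁ _), ← iteratedDeriv_one, i.slope_self,
    i.iteratedDeriv_slope_self (by norm_num), i.iteratedDeriv_slope_self (by norm_num),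
    i.iteratedDeriv_slope_self (by norm_num)]
  norm_num

end NearestNeighbour

lemma exists_abs_pow_mul_inv_sub_inv_sub_le (L m₂ : ℝ) (hm₁ : 0 < m₁) {n : ℕ} (hn : Odd n) :
    ∃ C, ∀ (i : PointedProfile L m₁ m₂) (a : ℝ), 0 < a →
      |a ^ (n - 1) * (1 / (i.φ (i.α - a) - i.φ i.α) ^ n - 1 / (i.φ i.α - i.φ (i.α + a)) ^ n)
        - (2 * deriv (i.slope ^ (-n : ℤ)) i.α
          + iteratedDeriv 3 (i.slope ^ (-n : ℤ)) i.α / 3 * a ^ 2)| ≤ C * a ^ 4 := by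
  have hunif := uniformContDiffOn_slope_zpow (L := L) (m₂ := m₂) hm₁ (-n)
  obtain ⟨M, hM⟩ := hunif.bounded
  refine ⟨M / 60, fun i a ha ↦ ?_⟩
  have htaylor := abs_add_sub_sub_odd_taylor_le (hunif.contDiff i)
    (fun t ↦ hM 5 le_rfl i t trivial) i.α ha.le
  rw [i.pow_mul_inv_sub_inv_eq ha.ne' hn]
  set F := i.slope ^ (-n : ℤ)
  calc |(F (i.α + a) - F (i.α - a)) / a - (2 * deriv F i.α + iteratedDeriv 3 F i.α / 3 * a ^ 2)|
      = |F (i.α + a) - F (i.α - a)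
          - (2 * a * deriv F i.α + a ^ 3 / 3 * iteratedDeriv 3 F i.α)| / a := by
        rw [← abs_of_pos ha, ← abs_div, abs_of_pos ha]
        congr 1
        field_simp
    _ ≤ M * a ^ 5 / 60 / a := by gcongr
    _ = M / 60 * a ^ 4 := by field_simp

section Phase

variable (i : PointedProfile L m₁ m₂)

lemma sub_le_mul_sub {x y : ℝ} (hxy : x ≤ y) : i.φ y - i.φ x ≤ -m₁ * (y - x) :=
  image_sub_le_mul_sub_of_deriv_le (i.contDiff.differentiable (by norm_num)) i.deriv_le hxy

lemma abs_sub_le (hm₁ : 0 < m₁) {t : ℝ} (ht : |t - i.α| ≤ 1) :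
    |i.φ t - i.φ i.α| ≤ L - m₁ * (1 - |t - i.α|) := by
  have hperiod_base := i.map_add_one i.α
  have hperiod := i.map_add_one t
  rcases le_total i.α t with hαt | htα
  · rw [abs_of_nonneg (sub_nonneg.2 hαt)] at ht ⊢
    have hdecr := i.sub_le_mul_sub hαt
    have hnext := i.sub_le_mul_sub (x := t) (y := i.α + 1) (by linarith)
    rw [abs_of_nonpos (by nlinarith)]
    linarith
  · rw [abs_of_nonpos (sub_nonpos.2 htα)] at ht ⊢
    have hdecr := i.sub_le_mul_sub htα
    have hnext := i.sub_le_mul_sub (x := i.α) (y := t + 1) (by linarith)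
    rw [abs_of_nonneg (by nlinarith)]
    linarith

end Phase

/-- The cotangent interaction kernel with its pole at `α` removed by subtracting the multiple of
`cot (π (t - α))` with the same residue. The value at the points `t ≡ α (mod 1)`, where `cot`
takes the junk value `0`, is the continuous extension. -/
noncomputable def regularKernel (i : PointedProfile L m₁ m₂) (t : ℝ) : ℝ :=
  if sin (π * (t - i.α)) = 0 then L / π * deriv (i.slope ^ (-1 : ℤ)) i.α
  else cot (π * (i.φ t - i.φ i.α) / L)
    - L * (i.slope ^ (-1 : ℤ)) i.α * cot (π * (t - i.α))

lemma regularKernel_periodic (hL : L ≠ 0) (i : PointedProfile L m₁ m₂) :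
    Function.Periodic i.regularKernel 1 := fun t ↦ by
  have hlinear : π * (t + 1 - i.α) = π * (t - i.α) + π := by ring
  have hphase : π * (i.φ t - L - i.φ i.α) / L = π * (i.φ t - i.φ i.α) / L - π := by
    field_simp
    ring
  simp only [regularKernel, hlinear, sin_add_pi, neg_eq_zero, i.map_add_one, hphase,
    cot_periodic _, cot_periodic.sub_eq]

lemma abs_phase_lt_pi (hL : 0 < L) (hm₁ : 0 < m₁) (i : PointedProfile L m₁ m₂) {t : ℝ}
    (ht : |t - i.α| < 1) : |π * (i.φ t - i.φ i.α) / L| < π := by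
  have hsub : |i.φ t - i.φ i.α| < L := (i.abs_sub_le hm₁ ht.le).trans_lt
    (sub_lt_self L (mul_pos hm₁ (sub_pos.2 ht)))
  rw [abs_div, abs_mul, abs_of_pos pi_pos, abs_of_pos hL, div_lt_iff₀ hL]
  exact mul_lt_mul_of_pos_left hsub pi_pos

lemma regularKernel_eq_dslope_add (hL : 0 < L) (hm₁ : 0 < m₁) (i : PointedProfile L m₁ m₂)
    {t : ℝ} (ht : |t - i.α| < 1) :
    i.regularKernel t = L / π * dslope (i.slope ^ (-1 : ℤ)) i.α t
      + logDeriv sinc (π * (i.φ t - i.φ i.α) / L)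
      - L * (i.slope ^ (-1 : ℤ)) i.α * logDeriv sinc (π * (t - i.α)) := by
  rcases eq_or_ne t i.α with rfl | htα
  · simp [regularKernel, logDeriv_sinc_zero]
  have ht₀ : t - i.α ≠ 0 := sub_ne_zero.2 htα
  have hslope : i.slope t ≠ 0 := i.slope_ne_zero hm₁ t
  have hsin := sin_pi_mul_ne_zero_of_abs_lt_one ht₀ ht
  have hphase : π * (i.φ t - i.φ i.α) / L ≠ 0 := by
    rw [← i.sub_mul_slope]
    positivity
  have hphase_lt := abs_lt.1 (i.abs_phase_lt_pi hL hm₁ ht)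
  have hsin_phase : sin (π * (i.φ t - i.φ i.α) / L) ≠ 0 := fun h ↦
    hphase ((sin_eq_zero_iff_of_lt_of_lt hphase_lt.1 hphase_lt.2).1 h)
  rw [regularKernel, if_neg hsin, cot_eq_inv_add_logDeriv_sinc hphase hsin_phase,
    cot_eq_inv_add_logDeriv_sinc (mul_ne_zero pi_ne_zero ht₀) hsin, dslope_of_ne _ htα,
    slope_def_field, ← i.sub_mul_slope]
  simp only [Pi.pow_apply, zpow_neg_one]
  field_simp
  ring

-- Any radius between `1/2` and `1` serves: the ball has to contain a full period, but to stay away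
-- from the neighbouring poles `α ± 1`.
lemma uniformContDiffOn_sub_base (n : ℕ) :
    UniformContDiffOn n (fun (i : PointedProfile L m₁ m₂) t ↦ t - i.α)
      fun i ↦ Metric.ball i.α (3 / 4) := by
  refine UniformContDiffOn.of_le (n := n + 1) (.of_deriv (B := 3 / 4)
    (fun i t _ ↦ contDiffAt_id.sub contDiffAt_const) (fun i t ht ↦ ?_) ?_) n.le_succ
  · exact (Metric.mem_ball.1 ht).le
  · simpa using UniformContDiffOn.const (c := fun _ ↦ (1 : ℝ)) (B := 1) (by simp)

lemma uniformContDiffOn_logDeriv_sinc_linear (n : ℕ) :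
    UniformContDiffOn n (fun (i : PointedProfile L m₁ m₂) t ↦ logDeriv sinc (π * (t - i.α)))
      fun i ↦ Metric.ball i.α (3 / 4) := by
  refine UniformContDiffOn.comp (K := Set.Icc (-(3 / 4 * π)) (3 / 4 * π))
    (F := fun (i : PointedProfile L m₁ m₂) t ↦ π * (t - i.α)) (contDiffOn_logDeriv_sinc n)
    isOpen_Ioo isCompact_Icc
    (Set.Icc_subset_Ioo (by linarith [pi_pos]) (by linarith [pi_pos]))
    ((UniformContDiffOn.const fun _ ↦ le_rfl).mul (uniformContDiffOn_sub_base n))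
    (fun _ ↦ Metric.isOpen_ball) fun i t ht ↦ ?_
  have ht : |t - i.α| < 3 / 4 := ht
  rw [Set.mem_Icc, ← abs_le, abs_mul, abs_of_pos pi_pos, mul_comm]
  gcongr

lemma uniformContDiffOn_logDeriv_sinc_phase (hL : 0 < L) (hm₁ : 0 < m₁) :
    UniformContDiffOn 5
      (fun (i : PointedProfile L m₁ m₂) t ↦ logDeriv sinc (π * (i.φ t - i.φ i.α) / L))
      fun i ↦ Metric.ball i.α (3 / 4) := by
  have hslope : UniformContDiffOn 5 (fun i : PointedProfile L m₁ m₂ ↦ i.slope)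
      fun i ↦ Metric.ball i.α (3 / 4) :=
    (uniformContDiffOn_deriv.dslope (fun i ↦ i.contDiff) PointedProfile.α).mono
      fun _ ↦ Set.subset_univ _
  have hphase : UniformContDiffOn 5
      (fun (i : PointedProfile L m₁ m₂) t ↦ π * (i.φ t - i.φ i.α) / L)
      fun i ↦ Metric.ball i.α (3 / 4) := by
    refine ((UniformContDiffOn.const (c := fun _ ↦ π / L) fun _ ↦ le_rfl).mul
      ((uniformContDiffOn_sub_base 5).mul hslope)).congr (fun _ ↦ Metric.isOpen_ball)
      fun i t _ ↦ ?_
    simp only [Pi.mul_apply, i.sub_mul_slope]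
    ring
  set B := π * (L - m₁ / 4) / L
  have hB : B < π := by
    rw [div_lt_iff₀ hL]
    exact mul_lt_mul_of_pos_left (by linarith) pi_pos
  refine hphase.comp (K := Set.Icc (-B) B) (contDiffOn_logDeriv_sinc 5) isOpen_Ioo isCompact_Icc
    (Set.Icc_subset_Ioo (by linarith) hB) (fun _ ↦ Metric.isOpen_ball) fun i t ht ↦ ?_
  have ht : |t - i.α| < 3 / 4 := ht
  have hsub : |i.φ t - i.φ i.α| ≤ L - m₁ / 4 := by
    nlinarith [i.abs_sub_le hm₁ (t := t) (by linarith)]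
  rw [Set.mem_Icc, ← abs_le, abs_div, abs_mul, abs_of_pos pi_pos, abs_of_pos hL]
  exact div_le_div_of_nonneg_right (mul_le_mul_of_nonneg_left hsub pi_pos.le) hL.le

lemma uniformContDiffOn_regularKernel (hL : 0 < L) (hm₁ : 0 < m₁) :
    UniformContDiffOn 4 (regularKernel (L := L) (m₁ := m₁) (m₂ := m₂)) fun _ ↦ Set.univ := by
  have hq := uniformContDiffOn_slope_zpow (L := L) (m₂ := m₂) hm₁ (-1)
  have hdslope := (hq.deriv.dslope (fun i ↦ hq.contDiff i) PointedProfile.α).mono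
    (V := fun i ↦ Metric.ball i.α (3 / 4)) fun _ ↦ Set.subset_univ _
  obtain ⟨M, hM⟩ := hq.bounded
  have hresidue (i : PointedProfile L m₁ m₂) : |L * (i.slope ^ (-1 : ℤ)) i.α| ≤ L * M := by
    rw [abs_mul, abs_of_pos hL]
    gcongr
    simpa using hM 0 (by norm_num) i i.α trivial
  refine UniformContDiffOn.of_periodic (U := fun i ↦ Metric.ball i.α (3 / 4))
    ((((UniformContDiffOn.const (c := fun _ ↦ L / π) fun _ ↦ le_rfl).mul hdslope).add
      ((uniformContDiffOn_logDeriv_sinc_phase hL hm₁).of_le (by norm_num))).sub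
      ((UniformContDiffOn.const hresidue).mul (uniformContDiffOn_logDeriv_sinc_linear 4))
      |>.congr (fun _ ↦ Metric.isOpen_ball) fun i t ht ↦ ?_)
    (regularKernel_periodic hL.ne') fun i t ↦ ⟨round (t - i.α), ?_⟩
  · exact i.regularKernel_eq_dslope_add hL hm₁ ((Metric.mem_ball.1 ht).trans (by norm_num))
  · rw [Metric.mem_ball, Real.dist_eq, sub_right_comm]
    exact (abs_sub_round _).trans_lt (by norm_num)

section PrincipalValue

variable (i : PointedProfile L m₁ m₂)

lemma integral_cot_eq_neg_integral_regularKernel (hker : Continuous i.regularKernel) {δ : ℝ}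
    (hδ : δ ∈ Set.Ioo 0 (1 / 2)) :
    ∫ β in (i.α + δ)..(i.α + 1 - δ), cot (π * (i.φ i.α - i.φ β) / L) =
      -∫ β in (i.α + δ)..(i.α + 1 - δ), i.regularKernel β := by
  have hsin : ∀ β ∈ Set.uIcc (i.α + δ) (i.α + 1 - δ), sin (π * (β - i.α)) ≠ 0 := fun β hβ ↦ by
    rw [Set.uIcc_of_le (by linarith [hδ.2])] at hβ
    have hpos : 0 < β - i.α := by linarith [hβ.1, hδ.1]
    exact sin_pi_mul_ne_zero_of_abs_lt_one hpos.ne' (by rw [abs_of_pos hpos]; linarith [hβ.2, hδ.1])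
  have hcot : ContinuousOn (fun β ↦ cot (π * (β - i.α))) (Set.uIcc (i.α + δ) (i.α + 1 - δ)) :=
    fun β hβ ↦ ((contDiffAt_cot (n := 0) (hsin β hβ)).continuousAt.comp
      (f := fun β ↦ π * (β - i.α)) (by fun_prop)).continuousWithinAt
  have hsplit : Set.EqOn (fun β ↦ cot (π * (i.φ i.α - i.φ β) / L))
      (fun β ↦ -(i.regularKernel β + L * (i.slope ^ (-1 : ℤ)) i.α * cot (π * (β - i.α))))
      (Set.uIcc (i.α + δ) (i.α + 1 - δ)) := fun β hβ ↦ by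
    simp only [regularKernel, if_neg (hsin β hβ), sub_add_cancel]
    rw [← cot_neg]
    ring_nf
  rw [intervalIntegral.integral_congr hsplit, intervalIntegral.integral_neg,
    intervalIntegral.integral_add (hker.intervalIntegrable _ _)
      (hcot.intervalIntegrable.const_mul _),
    intervalIntegral.integral_const_mul, integral_cot_pi_mul_sub_eq_zero, mul_zero, add_zero]

lemma tendsto_integral_cot (hker : Continuous i.regularKernel) :
    Tendsto (fun δ ↦ ∫ β in (i.α + δ)..(i.α + 1 - δ), cot (π * (i.φ i.α - i.φ β) / L))
      (𝓝[>] 0) (𝓝 (-∫ β in i.α..(i.α + 1), i.regularKernel β)) := by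
  have : Continuous fun x ↦ ∫ β in (0 : ℝ)..x, i.regularKernel β :=
    intervalIntegral.continuous_primitive (fun _ _ ↦ hker.intervalIntegrable _ _) 0
  have hcont : Continuous fun δ ↦ ∫ β in (i.α + δ)..(i.α + 1 - δ), i.regularKernel β := by
    have hsub (δ : ℝ) := intervalIntegral.integral_interval_sub_left
      (hker.intervalIntegrable (μ := volume) 0 (i.α + 1 - δ))
      (hker.intervalIntegrable 0 (i.α + δ))
    rw [← funext hsub]
    fun_prop
  have hlim := (hcont.tendsto 0).neg.mono_left (nhdsWithin_le_nhds (s := Set.Ioi 0))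
  simp only [add_zero, sub_zero] at hlim
  refine hlim.congr' ?_
  filter_upwards [Ioo_mem_nhdsGT (by norm_num : (0 : ℝ) < 1 / 2)] with δ hδ
  exact (i.integral_cot_eq_neg_integral_regularKernel hker hδ).symm

end PrincipalValue

lemma sum_regularKernel_eq (i : PointedProfile L m₁ m₂) {N : ℕ} (hN : N ≠ 0) {i₀ k : ℤ}
    (hα : i.α = i₀ * (N : ℝ)⁻¹) (hi₀ : i₀ ∈ Finset.Ico k (k + N)) :
    ∑ j ∈ Finset.Ico k (k + N), i.regularKernel (j * (N : ℝ)⁻¹) =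
      ∑ j ∈ (Finset.Ico k (k + N)).erase i₀, cot (π * (i.φ (j * (N : ℝ)⁻¹) - i.φ i.α) / L)
        + L / π * deriv (i.slope ^ (-1 : ℤ)) i.α := by
  have hoff : ∀ j ∈ (Finset.Ico k (k + N)).erase i₀, i.regularKernel (j * (N : ℝ)⁻¹) =
      cot (π * (i.φ (j * (N : ℝ)⁻¹) - i.φ i.α) / L)
        - L * (i.slope ^ (-1 : ℤ)) i.α * cot (π * (j * (N : ℝ)⁻¹ - i.α)) := fun j hj ↦ by
    obtain ⟨hj₀, hj⟩ := Finset.mem_erase.1 hj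
    rw [Finset.mem_Ico] at hj hi₀
    have hNpos : (0 : ℝ) < N := by positivity
    have hsub : j * (N : ℝ)⁻¹ - i.α = ((j - i₀ : ℤ) : ℝ) * (N : ℝ)⁻¹ := by
      rw [hα]
      push_cast
      ring
    have hlt : |((j - i₀ : ℤ) : ℝ)| < N := by exact_mod_cast abs_lt.2 ⟨by lia, by lia⟩
    refine if_neg (sin_pi_mul_ne_zero_of_abs_lt_one ?_ ?_) <;> rw [hsub]
    · exact mul_ne_zero (by exact_mod_cast sub_ne_zero.2 hj₀) (inv_ne_zero hNpos.ne')
    · rwa [abs_mul, abs_of_pos (inv_pos.2 hNpos), ← div_eq_mul_inv, div_lt_one hNpos]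
  have hself : i.regularKernel (i₀ * (N : ℝ)⁻¹) = L / π * deriv (i.slope ^ (-1 : ℤ)) i.α := by
    simp [regularKernel, ← hα]
  have hcot := sum_Ico_cot_eq_zero hN k i₀
  rw [← Finset.sum_erase_add _ _ hi₀, ← hα, sub_self, mul_zero, cot_zero, add_zero] at hcot
  rw [← Finset.sum_erase_add _ _ hi₀, hself, Finset.sum_congr rfl hoff, Finset.sum_sub_distrib,
    ← Finset.mul_sum, hcot, mul_zero, sub_zero]

section Coefficients

variable (i : PointedProfile L m₁ m₂)

lemma deriv_ne_zero (hm₁ : 0 < m₁) : deriv i.φ i.α ≠ 0 :=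
  i.slope_self ▸ i.slope_ne_zero hm₁ i.α

lemma two_mul_deriv_slope_zpow_neg_one (hm₁ : 0 < m₁) :
    2 * deriv (i.slope ^ (-1 : ℤ)) i.α = -(iteratedDeriv 2 i.φ i.α / deriv i.φ i.α ^ 2) := by
  rw [i.two_mul_deriv_slope_zpow_self hm₁]
  norm_num [zpow_neg]
  ring

lemma two_mul_deriv_slope_zpow_neg_three (hm₁ : 0 < m₁) :
    2 * deriv (i.slope ^ (-3 : ℤ)) i.α = -(3 * iteratedDeriv 2 i.φ i.α / deriv i.φ i.α ^ 4) := by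
  rw [i.two_mul_deriv_slope_zpow_self hm₁]
  norm_num [zpow_neg]
  ring

lemma v1coef_eq (hm₁ : 0 < m₁) :
    v1coef L i.φ i.α = 2 * deriv (i.slope ^ (-1 : ℤ)) i.α / L := by
  rw [i.two_mul_deriv_slope_zpow_neg_one hm₁, v1coef]
  ring

lemma v2coef_eq (hm₁ : 0 < m₁) :
    v2coef i.φ i.α = iteratedDeriv 3 (i.slope ^ (-1 : ℤ)) i.α / 3 := by
  have := i.deriv_ne_zero hm₁
  rw [i.iteratedDeriv_three_slope_zpow_self hm₁, v2coef]
  norm_num [zpow_neg]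
  field_simp
  ring

lemma v3coef_eq (hm₁ : 0 < m₁) :
    v3coef i.φ i.α = iteratedDeriv 3 (i.slope ^ (-3 : ℤ)) i.α / 3 := by
  have := i.deriv_ne_zero hm₁
  rw [i.iteratedDeriv_three_slope_zpow_self hm₁, v3coef]
  norm_num [zpow_neg]
  field_simp
  ring

end Coefficients

lemma exists_abs_inv_sub_inv_sub_le (L m₂ : ℝ) (hm₁ : 0 < m₁) :
    ∃ C, ∀ (i : PointedProfile L m₁ m₂) (a : ℝ), 0 < a →
      |1 / (i.φ (i.α - a) - i.φ i.α) - 1 / (i.φ i.α - i.φ (i.α + a))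
        - (-(iteratedDeriv 2 i.φ i.α / deriv i.φ i.α ^ 2) + v2coef i.φ i.α * a ^ 2)| ≤
        C * a ^ 4 := by
  obtain ⟨C, hC⟩ := exists_abs_pow_mul_inv_sub_inv_sub_le L m₂ hm₁ odd_one
  refine ⟨C, fun i a ha ↦ ?_⟩
  rw [← i.two_mul_deriv_slope_zpow_neg_one hm₁, i.v2coef_eq hm₁]
  simpa using hC i a ha

lemma exists_abs_sq_mul_inv_cube_sub_inv_cube_sub_le (L m₂ : ℝ) (hm₁ : 0 < m₁) :
    ∃ C, ∀ (i : PointedProfile L m₁ m₂) (a : ℝ), 0 < a →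
      |a ^ 2 * (1 / (i.φ (i.α - a) - i.φ i.α) ^ 3 - 1 / (i.φ i.α - i.φ (i.α + a)) ^ 3)
        - (-(3 * iteratedDeriv 2 i.φ i.α / deriv i.φ i.α ^ 4) + v3coef i.φ i.α * a ^ 2)| ≤
        C * a ^ 4 := by
  obtain ⟨C, hC⟩ := exists_abs_pow_mul_inv_sub_inv_sub_le L m₂ hm₁ (by decide : Odd 3)
  refine ⟨C, fun i a ha ↦ ?_⟩
  rw [← i.two_mul_deriv_slope_zpow_neg_three hm₁, i.v3coef_eq hm₁]
  exact hC i a ha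

lemma exists_abs_sum_cot_sub_le (m₂ : ℝ) (hL : 0 < L) (hm₁ : 0 < m₁) :
    ∃ C, ∀ (i : PointedProfile L m₁ m₂) (N : ℕ), N ≠ 0 → ∀ i₀ k : ℤ, i.α = i₀ * (N : ℝ)⁻¹ →
      i₀ ∈ Finset.Ico k (k + N) →
      |-(2 * π * (N : ℝ)⁻¹ / L ^ 2) *
          ∑ j ∈ (Finset.Ico k (k + N)).erase i₀, cot (π * (i.φ (j * (N : ℝ)⁻¹) - i.φ i.α) / L)
        - (2 * π / L ^ 2 * (-∫ β in i.α..(i.α + 1), i.regularKernel β)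
          + v1coef L i.φ i.α * (N : ℝ)⁻¹)| ≤ C * (N : ℝ)⁻¹ ^ 4 := by
  have hunif := uniformContDiffOn_regularKernel (m₂ := m₂) hL hm₁
  obtain ⟨M, hM⟩ := hunif.bounded
  refine ⟨2 * π / L ^ 2 * (M / 384), fun i N hN i₀ k hα hi₀ ↦ ?_⟩
  have htrapezoid := abs_inv_mul_sum_Ico_sub_integral_le_of_periodic (hunif.contDiff i)
    (fun t ↦ hM 4 le_rfl i t trivial) (regularKernel_periodic hL.ne' i) hN k i.α
  rw [i.sum_regularKernel_eq hN hα hi₀] at htrapezoid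
  rw [i.v1coef_eq hm₁]
  set S := ∑ j ∈ (Finset.Ico k (k + N)).erase i₀, cot (π * (i.φ (j * (N : ℝ)⁻¹) - i.φ i.α) / L)
  set q' := deriv (i.slope ^ (-1 : ℤ)) i.α
  set I := ∫ β in i.α..(i.α + 1), i.regularKernel β
  calc _ = |-(2 * π / L ^ 2) * ((N : ℝ)⁻¹ * (S + L / π * q') - I)| := by
        congr 1
        field_simp
        ring
    _ = 2 * π / L ^ 2 * |(N : ℝ)⁻¹ * (S + L / π * q') - I| := by
        rw [abs_mul, abs_neg, abs_of_pos (by positivity)]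
    _ ≤ 2 * π / L ^ 2 * (M * (N : ℝ)⁻¹ ^ 4 / 384) := by gcongr
    _ = 2 * π / L ^ 2 * (M / 384) * (N : ℝ)⁻¹ ^ 4 := by ring

end PointedProfile

/-- Full expansion of the exact-solution chemical potential `f̄(α*)` at any
grid point `α* = i₀·a` (sum over any window `G = {k, …, k+N−1}` of `N` consecutive integers
containing `i₀`):
`f̄(α*) = μ(α*) + v₁(α*)·a + (v₂+v₃)(α*)·a² + R`, `|R| ≤ C·a⁴`, `C = C(m₁,m₂,L)`,
where `μ(α) = (2π/L²)·PV∫₀¹ cot(π(φ(α)−φ(β))/L) dβ − φ″/φ′² − 3φ″/φ′⁴`. The principal value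
over one period (with the symmetric `δ`-neighbourhood of `β ≡ α (mod 1)` removed) is
expressed via the interval `(α+δ, α+1−δ)` using `1`-periodicity of the integrand. -/
theorem stmt_15 (L m₁ m₂ : ℝ) (hL : 0 < L) (hm₁ : 0 < m₁) (hm₂ : 0 < m₂) :
    ∃ C : ℝ, 0 < C ∧
      ∀ N : ℕ, 2 ≤ N →
        ∀ φ : ℝ → ℝ, ContDiff ℝ 6 φ →
          (∀ α : ℝ, φ (α + 1) = φ α - L) →
          (∀ α : ℝ, deriv φ α ≤ -m₁) →
          (∀ k : ℕ, 1 ≤ k → k ≤ 6 → ∀ α : ℝ, |iteratedDeriv k φ α| ≤ m₂) →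
          ∀ i₀ k : ℤ, k ≤ i₀ → i₀ < k + (N:ℤ) →
            ∃ P R : ℝ,
              Tendsto (fun δ : ℝ =>
                  ∫ β in ((i₀:ℝ) * (N:ℝ)⁻¹ + δ)..((i₀:ℝ) * (N:ℝ)⁻¹ + 1 - δ),
                    Real.cot (π * (φ ((i₀:ℝ) * (N:ℝ)⁻¹) - φ β) / L))
                (𝓝[>] (0:ℝ)) (𝓝 P) ∧
              -(2 * π * (N:ℝ)⁻¹ / L ^ 2) *
                  (∑ j ∈ (Finset.Ico k (k + (N:ℤ))).erase i₀,
                    Real.cot (π * (φ ((j:ℝ) * (N:ℝ)⁻¹) - φ ((i₀:ℝ) * (N:ℝ)⁻¹)) / L))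
                + (1 / (φ ((i₀:ℝ) * (N:ℝ)⁻¹ - (N:ℝ)⁻¹) - φ ((i₀:ℝ) * (N:ℝ)⁻¹))
                  - 1 / (φ ((i₀:ℝ) * (N:ℝ)⁻¹) - φ ((i₀:ℝ) * (N:ℝ)⁻¹ + (N:ℝ)⁻¹)))
                + (N:ℝ)⁻¹ ^ 2 *
                  (1 / (φ ((i₀:ℝ) * (N:ℝ)⁻¹ - (N:ℝ)⁻¹) - φ ((i₀:ℝ) * (N:ℝ)⁻¹)) ^ 3
                  - 1 / (φ ((i₀:ℝ) * (N:ℝ)⁻¹) - φ ((i₀:ℝ) * (N:ℝ)⁻¹ + (N:ℝ)⁻¹)) ^ 3)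
                = ((2 * π / L ^ 2) * P
                    - iteratedDeriv 2 φ ((i₀:ℝ) * (N:ℝ)⁻¹) / (deriv φ ((i₀:ℝ) * (N:ℝ)⁻¹)) ^ 2
                    - 3 * iteratedDeriv 2 φ ((i₀:ℝ) * (N:ℝ)⁻¹)
                        / (deriv φ ((i₀:ℝ) * (N:ℝ)⁻¹)) ^ 4)
                  + v1coef L φ ((i₀:ℝ) * (N:ℝ)⁻¹) * (N:ℝ)⁻¹
                  + (v2coef φ ((i₀:ℝ) * (N:ℝ)⁻¹) + v3coef φ ((i₀:ℝ) * (N:ℝ)⁻¹)) * (N:ℝ)⁻¹ ^ 2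
                  + R ∧
              |R| ≤ C * (N:ℝ)⁻¹ ^ 4 := by
  obtain ⟨C₁, hsum⟩ := PointedProfile.exists_abs_sum_cot_sub_le m₂ hL hm₁
  obtain ⟨C₂, hinv⟩ := PointedProfile.exists_abs_inv_sub_inv_sub_le L m₂ hm₁
  obtain ⟨C₃, hcube⟩ := PointedProfile.exists_abs_sq_mul_inv_cube_sub_inv_cube_sub_le L m₂ hm₁
  refine ⟨max (C₁ + C₂ + C₃) 1, by positivity, ?_⟩
  intro N hN φ hφ hadd hderiv hbound i₀ k hk hk'
  have hN₀ : N ≠ 0 := by lia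
  let i : PointedProfile L m₁ m₂ := ⟨φ, i₀ * (N : ℝ)⁻¹, hφ, hadd, hderiv, hbound⟩
  have hker := (PointedProfile.uniformContDiffOn_regularKernel hL hm₁).contDiff i |>.continuous
  refine ⟨_, _, i.tendsto_integral_cot hker, (add_sub_cancel _ _).symm, ?_⟩
  have ha : 0 < (N : ℝ)⁻¹ := by positivity
  have hbounds := (abs_add_three _ _ _).trans (add_le_add_three
    (hsum i N hN₀ i₀ k rfl (Finset.mem_Ico.2 ⟨hk, hk'⟩)) (hinv i _ ha) (hcube i _ ha))
  calc _ ≤ C₁ * (N : ℝ)⁻¹ ^ 4 + C₂ * (N : ℝ)⁻¹ ^ 4 + C₃ * (N : ℝ)⁻¹ ^ 4 :=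
        (congrArg abs (by ring)).trans_le hbounds
    _ = (C₁ + C₂ + C₃) * (N : ℝ)⁻¹ ^ 4 := by ring
    _ ≤ max (C₁ + C₂ + C₃) 1 * (N : ℝ)⁻¹ ^ 4 := by gcongr; exact le_max_left _ _
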